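/- Let 0 ≤ q ≤ 1, η > 0, θ ≥ 0, τ ≥ 0 and fix s > 0. Let μ_s be a probability measure on ℝ with finite moments of all orders such that ∫ p_m(y;s) p_n(y;s) μ_s(dy) = 0 whenever m ≠ n. If x belongs to the topological support of μ_s (i.e. every open neighborhood of x has positive μ_s-measure), then Π_{j=0}^{n} A_j(x,s) ≥ 0 for every n ≥ 0. -/

import Mathlib

/-- `[n]_q = 1 + q + ⋯ + q^{n-1}`. -/
noncomputable def qnum (q : ℝ) (n : ℕ) : ℝ := ∑ i ∈ Finset.range n, q ^ i

/-- `[n]_q! = [1]_q [2]_q ⋯ [n]_q`. -/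
noncomputable def qfact (q : ℝ) (n : ℕ) : ℝ := ∏ i ∈ Finset.range n, qnum q (i + 1)

/-- q-binomial coefficient `[n choose k]_q`, with the convention that it is `0` for `k > n`. -/
noncomputable def qbinom (q : ℝ) (n k : ℕ) : ℝ :=
  if k ≤ n then qfact q n / (qfact q (n - k) * qfact q k) else 0

/-- `a_n = η⁻¹ + θ[n]_q + [n]_q² ητ`. -/
noncomputable def aCoef (η θ τ q : ℝ) (n : ℕ) : ℝ :=
  η⁻¹ + θ * qnum q n + (qnum q n) ^ 2 * η * τ

/-- `b_n(t) = (tη + θ + ([n]_q + [n-1]_q)ητ)[n]_q`. -/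
noncomputable def bCoef (η θ τ q t : ℝ) (n : ℕ) : ℝ :=
  (t * η + θ + (qnum q n + qnum q (n - 1)) * η * τ) * qnum q n

/-- `c_n(t) = η(t + τ[n-1]_q)[n]_q`. -/
noncomputable def cCoef (η τ q t : ℝ) (n : ℕ) : ℝ :=
  η * (t + τ * qnum q (n - 1)) * qnum q n

/-- `A_n(x,s) = a_n + q^n x - sη q^n [n]_q`. -/
noncomputable def ACoef (η θ τ q x s : ℝ) (n : ℕ) : ℝ :=
  aCoef η θ τ q n + q ^ n * x - s * η * q ^ n * qnum q n

/-- `x_k(s) = ((sη q^k - θ)[k]_q - η⁻¹ - ητ[k]_q²)/q^k`, the zero of `x ↦ A_k(x,s)`. -/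
noncomputable def xPt (η θ τ q s : ℝ) (k : ℕ) : ℝ :=
  ((s * η * q ^ k - θ) * qnum q k - η⁻¹ - η * τ * (qnum q k) ^ 2) / q ^ k

open MeasureTheory

/-!
Up to sign, `p_n` is the Karlin–McGregor polynomial `r_n` of the birth and death process with
rates `a_n`, `c_n` and spectral parameter `A_0 = y + η⁻¹`. For such polynomials an orthogonality
measure is carried by `{A_0 ≥ 0}`: at a negative spectral value the kernels `∑ π_n r_n²` diverge,
by Carleman's condition, and Chebyshev's inequality then leaves no mass there. The Christoffel
transform `A_0 μ` is therefore a positive measure, and its orthogonal polynomials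
`∑_{k ≤ n} π_k r_k` are again Karlin–McGregor polynomials, with rates `a_{n+1}`, `q² c_n` and
spectral parameter exactly `A_1`. Iterating, `A_0 ⋯ A_k ≥ 0` holds `μ`-almost everywhere, hence
on the support by continuity. For `q = 0` the first step suffices, since `A_j = a_j > 0` for
`j ≥ 1`.
-/

section BirthDeath

variable {K A B : Type*} [Field K] [CommRing A] [Algebra K A] [CommRing B] [Algebra K B]

/-- The potential coefficients `π_n = a_0 ⋯ a_{n-1} / (c_1 ⋯ c_n)` of the birth and death process
with birth rates `a_n` and death rates `c_n`; they are its reversing weights. -/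
def potentialCoeff (a c : ℕ → K) (n : ℕ) : K :=
  ∏ i ∈ Finset.range n, a i / c (i + 1)

/-- The Karlin–McGregor sequence `r_n` with spectral parameter `z`: the solution of
`z r_n = a_n (r_n - r_{n+1}) + c_n (r_n - r_{n-1})` with `r_0 = 1`, where `c_0` is read as `0`.
It takes values in a commutative algebra, so that it covers both the polynomials themselves and
their values. -/
def birthDeathSeq (a c : ℕ → K) (z : A) : ℕ → A
  | 0 => 1
  | 1 => 1 - (a 0)⁻¹ • z
  | n + 2 => birthDeathSeq a c z (n + 1) - (a (n + 1))⁻¹ • (z * birthDeathSeq a c z (n + 1) -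
      c (n + 1) • (birthDeathSeq a c z (n + 1) - birthDeathSeq a c z n))

/-- The partial sums `∑_{k ≤ n} π_k r_k` of the Karlin–McGregor sequence, which up to
normalization are the kernel polynomials at spectral parameter `0`. -/
def birthDeathSum (a c : ℕ → K) (z : A) (n : ℕ) : A :=
  ∑ k ∈ Finset.range (n + 1), potentialCoeff a c k • birthDeathSeq a c z k

/-- The kernel polynomials `∑_{n < M} π_n r_n(w) r_n(z)`, which reproduce values at `w` under the
orthogonality functional when it is normalized by `L 1 = 1`. -/
def birthDeathKernel (a c : ℕ → K) (w : K) (z : A) (M : ℕ) : A :=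
  ∑ n ∈ Finset.range M, (potentialCoeff a c n * birthDeathSeq a c w n) • birthDeathSeq a c z n

/-- Orthogonality of a sequence in an algebra with respect to a linear functional. -/
def IsOrthogonalFor (L : A →ₗ[K] K) (r : ℕ → A) : Prop :=
  Pairwise fun m n => L (r m * r n) = 0

variable {a c : ℕ → K}

@[simp]
theorem potentialCoeff_zero : potentialCoeff a c 0 = 1 := by
  simp [potentialCoeff]

theorem potentialCoeff_ne_zero (ha : ∀ n, a n ≠ 0) (hc : ∀ n, c (n + 1) ≠ 0) (n : ℕ) :
    potentialCoeff a c n ≠ 0 :=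
  Finset.prod_ne_zero_iff.mpr fun i _ => div_ne_zero (ha i) (hc i)

theorem mul_potentialCoeff_succ {n : ℕ} (hc : c (n + 1) ≠ 0) :
    c (n + 1) * potentialCoeff a c (n + 1) = a n * potentialCoeff a c n := by
  rw [potentialCoeff, Finset.prod_range_succ, ← potentialCoeff]
  field_simp

@[simp]
theorem birthDeathSeq_zero (z : A) : birthDeathSeq a c z 0 = 1 := rfl

theorem mul_birthDeathSeq_succ {n : ℕ} (ha : a (n + 1) ≠ 0) (z : A) :
    z * birthDeathSeq a c z (n + 1) =
      a (n + 1) • (birthDeathSeq a c z (n + 1) - birthDeathSeq a c z (n + 2)) +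
        c (n + 1) • (birthDeathSeq a c z (n + 1) - birthDeathSeq a c z n) := by
  simp [birthDeathSeq, smul_smul, ha]

theorem birthDeathSeq_zero_right (n : ℕ) : birthDeathSeq a c (0 : A) n = 1 := by
  induction n using birthDeathSeq.induct with
  | case1 => rfl
  | case2 => simp [birthDeathSeq]
  | case3 n ih₁ ih₀ => simp [birthDeathSeq, ih₁, ih₀]

theorem eq_smul_birthDeathSeq (ha : ∀ n, a n ≠ 0) {β γ g : ℕ → K} (hβ : ∀ n, β n ≠ 0)
    (hbirth : ∀ n, β n * g (n + 1) = a n * g n) (hdeath : ∀ n, γ n * g n = c (n + 1) * g (n + 1))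
    {z : A} {R : ℕ → A} (hR₀ : R 0 = g 0 • 1) (hR₁ : β 0 • R 1 = a 0 • R 0 - z * R 0)
    (hR : ∀ n, β (n + 1) • R (n + 2) =
      (a (n + 1) + c (n + 1)) • R (n + 1) - γ n • R n - z * R (n + 1)) (n : ℕ) :
    R n = g n • birthDeathSeq a c z n := by
  have cancel_β (n : ℕ) {u v : A} (h : β n • u = β n • v) : u = v := by
    simpa [smul_smul, hβ n] using congrArg ((β n)⁻¹ • ·) h
  induction n using birthDeathSeq.induct with
  | case1 => exact hR₀
  | case2 =>
    refine cancel_β 0 ?_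
    have hz : z = a 0 • (a 0)⁻¹ • z := by rw [smul_inv_smul₀ (ha 0)]
    rw [hR₁, hR₀, smul_smul (β 0), hbirth, mul_smul_comm, mul_one, birthDeathSeq]
    nth_rewrite 1 [hz]
    module
  | case3 n ih₁ ih₀ =>
    refine cancel_β (n + 1) ?_
    rw [hR, ih₁, ih₀, mul_smul_comm, mul_birthDeathSeq_succ (ha (n + 1)), smul_smul (γ n),
      hdeath, smul_smul (β (n + 1)), hbirth]
    module

theorem map_birthDeathSeq (φ : A →ₐ[K] B) (z : A) (n : ℕ) :
    φ (birthDeathSeq a c z n) = birthDeathSeq a c (φ z) n := by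
  induction n using birthDeathSeq.induct with
  | case1 => simp
  | case2 => simp [birthDeathSeq]
  | case3 n ih₁ ih₀ => simp [birthDeathSeq, ih₁, ih₀]

theorem map_birthDeathKernel (φ : A →ₐ[K] B) (w : K) (z : A) (M : ℕ) :
    φ (birthDeathKernel a c w z M) = birthDeathKernel a c w (φ z) M := by
  simp only [birthDeathKernel, map_sum, map_smul, map_birthDeathSeq]

theorem birthDeathKernel_self (w : K) (M : ℕ) :
    birthDeathKernel a c w w M =
      ∑ n ∈ Finset.range M, potentialCoeff a c n * birthDeathSeq a c w n ^ 2 := by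
  simp only [birthDeathKernel, smul_eq_mul, mul_assoc, sq]

theorem birthDeathSum_zero (z : A) : birthDeathSum a c z 0 = 1 := by
  simp [birthDeathSum]

theorem birthDeathSum_succ (z : A) (n : ℕ) :
    birthDeathSum a c z (n + 1) =
      birthDeathSum a c z n + potentialCoeff a c (n + 1) • birthDeathSeq a c z (n + 1) := by
  rw [birthDeathSum, Finset.sum_range_succ, ← birthDeathSum]

-- The recurrence in divergence form: `a_n π_n (r_n - r_{n+1})` is the flux from `n` to `n + 1`.
theorem mul_birthDeathSum (ha : ∀ n, a n ≠ 0) (hc : ∀ n, c (n + 1) ≠ 0) (z : A) (n : ℕ) :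
    z * birthDeathSum a c z n =
      (a n * potentialCoeff a c n) • (birthDeathSeq a c z n - birthDeathSeq a c z (n + 1)) := by
  induction n with
  | zero => simp [birthDeathSum_zero, birthDeathSeq, smul_smul, ha 0]
  | succ n ih =>
    rw [birthDeathSum_succ, mul_add, ih, mul_smul_comm, mul_birthDeathSeq_succ (ha (n + 1)),
      ← mul_potentialCoeff_succ (hc n)]
    module

theorem mul_birthDeathSum_eq_sub (ha : ∀ n, a n ≠ 0) (hc : ∀ n, c (n + 1) ≠ 0) (z : A) (n : ℕ) :
    z * birthDeathSum a c z n =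
      (a n * potentialCoeff a c n) • birthDeathSeq a c z n +
        c (n + 1) • (birthDeathSum a c z n - birthDeathSum a c z (n + 1)) := by
  rw [mul_birthDeathSum ha hc, birthDeathSum_succ, ← mul_potentialCoeff_succ (hc n)]
  module

-- `R_n := ∑_{k ≤ n} π_k r_k` satisfies `z R_n = a_n (R_n - R_{n-1}) + c_{n+1} (R_n - R_{n+1})`;
-- rescaling `R_n` and shifting `z` turns this into a birth and death recurrence again.
theorem birthDeathSum_eq_smul_birthDeathSeq (ha : ∀ n, a n ≠ 0) (hc : ∀ n, c (n + 1) ≠ 0)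
    {a' c' : ℕ → K} {ρ d : K} (ha' : ∀ n, a' n ≠ 0) (hc'₀ : c' 0 = 0) (hρ : ρ ≠ 0)
    (hmul : ∀ n, a' n * c' (n + 1) = ρ ^ 2 * (a (n + 1) * c (n + 1)))
    (hadd : ∀ n, a' n + c' n = ρ * (a n + c (n + 1)) + d) (z : A) (n : ℕ) :
    birthDeathSum a c z n =
      potentialCoeff a' (ρ • c) n • birthDeathSeq a' c' (ρ • z + algebraMap K A d) n := by
  have hρc (n : ℕ) : (ρ • c) (n + 1) ≠ 0 := mul_ne_zero hρ (hc n)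
  have hbirth (n : ℕ) := mul_potentialCoeff_succ (a := a') (hρc n)
  refine eq_smul_birthDeathSeq ha' (β := fun n => ρ * c (n + 1)) (γ := fun n => ρ * a (n + 1))
    hρc hbirth (fun n => ?_) ?_ ?_ (fun n => ?_) n
  · refine mul_left_cancel₀ (hρc n) ?_
    have hb := hbirth n
    simp only [Pi.smul_apply, smul_eq_mul] at hb ⊢
    linear_combination -(potentialCoeff a' (ρ • c) n) * hmul n - c' (n + 1) * hb
  · simp [birthDeathSum_zero]
  · have ha'₀ : a' 0 = ρ * (a 0 + c 1) + d := by simpa [hc'₀] using hadd 0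
    have hflux := mul_birthDeathSum_eq_sub ha hc z 0
    rw [potentialCoeff_zero, birthDeathSeq_zero, ← birthDeathSum_zero (a := a) (c := c) z] at hflux
    rw [add_mul, smul_mul_assoc, hflux, ← Algebra.smul_def, ha'₀]
    module
  · have hflux := mul_birthDeathSum_eq_sub ha hc z (n + 1)
    rw [mul_smul, ← sub_eq_iff_eq_add'.mpr (birthDeathSum_succ z n)] at hflux
    rw [add_mul, smul_mul_assoc, hflux, ← Algebra.smul_def, hadd]
    module

section Orthogonality

variable {L : A →ₗ[K] K}

theorem IsOrthogonalFor.map_sum_mul_sum {r : ℕ → A} (hr : IsOrthogonalFor L r) (s : Finset ℕ)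
    (w : ℕ → K) :
    L ((∑ n ∈ s, w n • r n) * ∑ n ∈ s, w n • r n) = ∑ n ∈ s, w n ^ 2 * L (r n * r n) := by
  simp only [Finset.sum_mul_sum, map_sum, smul_mul_smul_comm, map_smul, smul_eq_mul]
  refine Finset.sum_congr rfl fun n hn => ?_
  rw [Finset.sum_eq_single_of_mem n hn fun m _ hmn => by rw [hr hmn.symm, mul_zero], sq]

theorem IsOrthogonalFor.of_eq_smul {r s : ℕ → A} (hs : IsOrthogonalFor L s) {g : ℕ → K}
    (hg : ∀ n, g n ≠ 0) (h : ∀ n, s n = g n • r n) : IsOrthogonalFor L r := by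
  intro m n hmn
  have hL : L (s m * s n) = 0 := hs hmn
  rw [h, h, smul_mul_smul_comm, map_smul, smul_eq_mul] at hL
  exact (mul_eq_zero.mp hL).resolve_left (mul_ne_zero (hg m) (hg n))

variable {z : A}

theorem IsOrthogonalFor.map_birthDeathSum_mul_of_lt
    (hr : IsOrthogonalFor L (birthDeathSeq a c z)) {m n : ℕ} (hmn : m < n) :
    L (birthDeathSum a c z m * birthDeathSeq a c z n) = 0 := by
  rw [birthDeathSum, Finset.sum_mul, map_sum]
  refine Finset.sum_eq_zero fun k hk => ?_
  have hkn : k ≠ n := by grind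
  rw [smul_mul_assoc, map_smul, hr hkn, smul_zero]

theorem IsOrthogonalFor.map_birthDeathSum_mul_self
    (hr : IsOrthogonalFor L (birthDeathSeq a c z)) (n : ℕ) :
    L (birthDeathSum a c z n * birthDeathSeq a c z n) =
      potentialCoeff a c n * L (birthDeathSeq a c z n * birthDeathSeq a c z n) := by
  cases n with
  | zero => simp [birthDeathSum_zero]
  | succ n =>
    rw [birthDeathSum_succ, add_mul, map_add, hr.map_birthDeathSum_mul_of_lt n.lt_succ_self,
      zero_add, smul_mul_assoc, map_smul, smul_eq_mul]

-- Evaluate `L (z R_n r_{n+1})` by applying the recurrence to either factor.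
theorem IsOrthogonalFor.potentialCoeff_mul_map_mul_self (ha : ∀ n, a n ≠ 0)
    (hc : ∀ n, c (n + 1) ≠ 0) (hr : IsOrthogonalFor L (birthDeathSeq a c z)) (n : ℕ) :
    potentialCoeff a c n * L (birthDeathSeq a c z n * birthDeathSeq a c z n) = L 1 := by
  induction n with
  | zero => simp
  | succ n ih =>
    set r := birthDeathSeq a c z with hr_def
    set R := birthDeathSum a c z with hR_def
    have hleft : L (z * R n * r (n + 1)) =
        -(a n * potentialCoeff a c n) * L (r (n + 1) * r (n + 1)) := by
      rw [hR_def, mul_birthDeathSum ha hc, smul_mul_assoc, sub_mul, map_smul, map_sub,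
        hr n.lt_succ_self.ne, smul_eq_mul]
      ring
    have hright : L (R n * (z * r (n + 1))) = -c (n + 1) * L (R n * r n) := by
      rw [hr_def, mul_birthDeathSeq_succ (ha (n + 1)), mul_add, mul_smul_comm, mul_smul_comm,
        mul_sub, mul_sub, map_add, map_smul, map_smul, map_sub, map_sub,
        hr.map_birthDeathSum_mul_of_lt n.lt_succ_self,
        hr.map_birthDeathSum_mul_of_lt (Nat.lt_add_of_pos_right two_pos)]
      simp [smul_eq_mul]
    rw [hr.map_birthDeathSum_mul_self, ih, ← mul_assoc, mul_comm (R n), hleft,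
      ← mul_potentialCoeff_succ (hc n)] at hright
    refine mul_left_cancel₀ (hc n) ?_
    linear_combination -hright

theorem IsOrthogonalFor.map_birthDeathKernel_mul_self (ha : ∀ n, a n ≠ 0)
    (hc : ∀ n, c (n + 1) ≠ 0) (hr : IsOrthogonalFor L (birthDeathSeq a c z)) (w : K) (M : ℕ) :
    L (birthDeathKernel a c w z M * birthDeathKernel a c w z M) =
      birthDeathKernel a c w w M * L 1 := by
  rw [birthDeathKernel, hr.map_sum_mul_sum, birthDeathKernel_self, Finset.sum_mul]
  refine Finset.sum_congr rfl fun n _ => ?_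
  rw [← hr.potentialCoeff_mul_map_mul_self ha hc n]
  ring

theorem IsOrthogonalFor.mulLeft_birthDeathSum (ha : ∀ n, a n ≠ 0) (hc : ∀ n, c (n + 1) ≠ 0)
    (hr : IsOrthogonalFor L (birthDeathSeq a c z)) :
    IsOrthogonalFor (L ∘ₗ LinearMap.mulLeft K z) (birthDeathSum a c z) := by
  have orth_of_lt {m n : ℕ} (hmn : m < n) :
      L (z * (birthDeathSum a c z m * birthDeathSum a c z n)) = 0 := by
    rw [mul_left_comm, mul_birthDeathSum ha hc, mul_smul_comm, mul_sub, map_smul, map_sub,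
      hr.map_birthDeathSum_mul_of_lt hmn,
      hr.map_birthDeathSum_mul_of_lt (Nat.lt_succ_of_lt hmn), sub_zero, smul_zero]
  intro m n hmn
  rcases hmn.lt_or_gt with h | h
  · exact orth_of_lt h
  · rw [mul_comm]
    exact orth_of_lt h

theorem IsOrthogonalFor.mulLeft_birthDeathSeq (ha : ∀ n, a n ≠ 0) (hc : ∀ n, c (n + 1) ≠ 0)
    (hr : IsOrthogonalFor L (birthDeathSeq a c z)) {a' c' : ℕ → K} {ρ d : K}
    (ha' : ∀ n, a' n ≠ 0) (hc'₀ : c' 0 = 0) (hρ : ρ ≠ 0)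
    (hmul : ∀ n, a' n * c' (n + 1) = ρ ^ 2 * (a (n + 1) * c (n + 1)))
    (hadd : ∀ n, a' n + c' n = ρ * (a n + c (n + 1)) + d) :
    IsOrthogonalFor (L ∘ₗ LinearMap.mulLeft K z)
      (birthDeathSeq a' c' (ρ • z + algebraMap K A d)) :=
  (hr.mulLeft_birthDeathSum ha hc).of_eq_smul
    (potentialCoeff_ne_zero ha' fun n => mul_ne_zero hρ (hc n))
    (birthDeathSum_eq_smul_birthDeathSeq ha hc ha' hc'₀ hρ hmul hadd z)

end Orthogonality

end BirthDeath

section Growth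

theorem two_div_le_add_one_div {N X u v : ℝ} (hN : 0 < N) (hX : 0 < X) (hu : 0 ≤ u) (hv : 0 ≤ v)
    (h : X ^ 2 = N ^ 4 * (u * v)) : 2 / N ≤ (u + v) / 2 + 1 / X := by
  have hXN : X ≤ N ^ 2 * ((u + v) / 2) := by
    refine le_of_sq_le_sq ?_ (by positivity)
    calc X ^ 2 = N ^ 4 * (u * v) := h
      _ ≤ N ^ 4 * ((u + v) / 2) ^ 2 := by
        gcongr
        linarith [four_mul_le_sq_add u v]
      _ = (N ^ 2 * ((u + v) / 2)) ^ 2 := by ring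
  have hamgm : 2 / N ≤ X / N ^ 2 + 1 / X := by
    field_simp
    linarith [two_mul_le_add_sq X N]
  have hdiv : X / N ^ 2 ≤ (u + v) / 2 := by
    rwa [div_le_iff₀' (by positivity)]
  linarith

variable {a c : ℕ → ℝ}

theorem potentialCoeff_pos (ha : ∀ n, 0 < a n) (hc : ∀ n, 0 < c (n + 1)) (n : ℕ) :
    0 < potentialCoeff a c n :=
  Finset.prod_pos fun i _ => div_pos (ha i) (hc i)

theorem birthDeathSeq_succ (ha : ∀ n, 0 < a n) (hc : ∀ n, 0 < c (n + 1)) (z : ℝ) (n : ℕ) :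
    birthDeathSeq a c z (n + 1) = birthDeathSeq a c z n +
      -z * birthDeathSum a c z n / (a n * potentialCoeff a c n) := by
  have hflux := mul_birthDeathSum (fun n => (ha n).ne') (fun n => (hc n).ne') z n
  have := ha n
  have := potentialCoeff_pos ha hc n
  rw [smul_eq_mul] at hflux
  field_simp
  linarith

theorem birthDeathSeq_anti (ha : ∀ n, 0 < a n) (hc : ∀ n, 0 < c (n + 1)) {w z : ℝ}
    (hwz : w ≤ z) (hz : z ≤ 0) (n : ℕ) :
    0 ≤ birthDeathSeq a c z n ∧ birthDeathSeq a c z n ≤ birthDeathSeq a c w n := by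
  induction n using Nat.strong_induction_on with
  | _ n ih =>
    cases n with
    | zero => simp
    | succ n =>
      have hπ (k : ℕ) := (potentialCoeff_pos ha hc k).le
      have hsum₀ : 0 ≤ birthDeathSum a c z n :=
        Finset.sum_nonneg fun k hk => mul_nonneg (hπ k) (ih k (Finset.mem_range.mp hk)).1
      have hsum : birthDeathSum a c z n ≤ birthDeathSum a c w n :=
        Finset.sum_le_sum fun k hk =>
          mul_le_mul_of_nonneg_left (ih k (Finset.mem_range.mp hk)).2 (hπ k)
      have hden := mul_nonneg (ha n).le (hπ n)
      have hz₀ : 0 ≤ -z := neg_nonneg.mpr hz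
      have hw₀ : 0 ≤ -w := hz₀.trans (neg_le_neg hwz)
      obtain ⟨hr₀, hr⟩ := ih n n.lt_succ_self
      rw [birthDeathSeq_succ ha hc, birthDeathSeq_succ ha hc]
      exact ⟨by positivity, by gcongr⟩

theorem one_le_birthDeathSeq (ha : ∀ n, 0 < a n) (hc : ∀ n, 0 < c (n + 1)) {z : ℝ}
    (hz : z ≤ 0) (n : ℕ) : 1 ≤ birthDeathSeq a c z n := by
  simpa only [birthDeathSeq_zero_right] using (birthDeathSeq_anti ha hc hz le_rfl n).2

theorem birthDeathKernel_self_nonneg (ha : ∀ n, 0 < a n) (hc : ∀ n, 0 < c (n + 1)) (w : ℝ)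
    (M : ℕ) : 0 ≤ birthDeathKernel a c w w M := by
  rw [birthDeathKernel_self]
  exact Finset.sum_nonneg fun n _ => mul_nonneg (potentialCoeff_pos ha hc n).le (sq_nonneg _)

theorem birthDeathKernel_self_le (ha : ∀ n, 0 < a n) (hc : ∀ n, 0 < c (n + 1)) {w z : ℝ}
    (hwz : w ≤ z) (hz : z ≤ 0) (M : ℕ) :
    birthDeathKernel a c z z M ≤ birthDeathKernel a c z w M :=
  Finset.sum_le_sum fun n _ => by
    obtain ⟨hr₀, hr⟩ := birthDeathSeq_anti ha hc hwz hz n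
    exact mul_le_mul_of_nonneg_left hr (mul_nonneg (potentialCoeff_pos ha hc n).le hr₀)

theorem one_le_birthDeathSum (ha : ∀ n, 0 < a n) (hc : ∀ n, 0 < c (n + 1)) {z : ℝ}
    (hz : z ≤ 0) (n : ℕ) : 1 ≤ birthDeathSum a c z n := by
  have hterm (k : ℕ) : 0 ≤ potentialCoeff a c k • birthDeathSeq a c z k :=
    mul_nonneg (potentialCoeff_pos ha hc k).le
      (zero_le_one.trans (one_le_birthDeathSeq ha hc hz k))
  calc (1 : ℝ) = potentialCoeff a c 0 • birthDeathSeq a c z 0 := by simp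
    _ ≤ birthDeathSum a c z n :=
      Finset.single_le_sum (fun k _ => hterm k) (Finset.mem_range.mpr n.succ_pos)

theorem one_div_le_mul_inv_sub_inv (ha : ∀ n, 0 < a n) (hc : ∀ n, 0 < c (n + 1)) {z : ℝ}
    (hz : z < 0) (n : ℕ) :
    1 / (a n * potentialCoeff a c n * (birthDeathSeq a c z n * birthDeathSeq a c z (n + 1))) ≤
      (-z)⁻¹ * ((birthDeathSeq a c z n)⁻¹ - (birthDeathSeq a c z (n + 1))⁻¹) := by
  have hr (k : ℕ) : 0 < birthDeathSeq a c z k :=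
    one_pos.trans_le (one_le_birthDeathSeq ha hc hz.le k)
  have hr₀ := hr n
  have hr₁ := hr (n + 1)
  have han := ha n
  have hπ := potentialCoeff_pos ha hc n
  have hflux : birthDeathSum a c z n = (-z)⁻¹ * (a n * potentialCoeff a c n *
      (birthDeathSeq a c z (n + 1) - birthDeathSeq a c z n)) := by
    rw [birthDeathSeq_succ ha hc]
    have := hz.ne
    field_simp
    ring
  calc
    _ ≤ birthDeathSum a c z n / (a n * potentialCoeff a c n *
        (birthDeathSeq a c z n * birthDeathSeq a c z (n + 1))) := by
      gcongr
      exact one_le_birthDeathSum ha hc hz.le n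
    _ = _ := by
      rw [hflux]
      field_simp

theorem summable_one_div_mul_birthDeathSeq (ha : ∀ n, 0 < a n) (hc : ∀ n, 0 < c (n + 1)) {z : ℝ}
    (hz : z < 0) :
    Summable fun n => 1 / (a n * potentialCoeff a c n *
      (birthDeathSeq a c z n * birthDeathSeq a c z (n + 1))) := by
  have hr (k : ℕ) : 0 < birthDeathSeq a c z k :=
    one_pos.trans_le (one_le_birthDeathSeq ha hc hz.le k)
  have hz₀ : 0 ≤ (-z)⁻¹ := inv_nonneg.mpr (neg_pos.mpr hz).le
  refine summable_of_sum_range_le (c := (-z)⁻¹) (fun n => ?_) fun M => ?_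
  · have := ha n
    have := potentialCoeff_pos ha hc n
    have := hr n
    have := hr (n + 1)
    positivity
  · calc
      _ ≤ ∑ n ∈ Finset.range M,
          (-z)⁻¹ * ((birthDeathSeq a c z n)⁻¹ - (birthDeathSeq a c z (n + 1))⁻¹) :=
        Finset.sum_le_sum fun n _ => one_div_le_mul_inv_sub_inv ha hc hz n
      _ = (-z)⁻¹ * (1 - (birthDeathSeq a c z M)⁻¹) := by
        rw [← Finset.mul_sum, Finset.sum_range_sub' fun n => (birthDeathSeq a c z n)⁻¹,
          birthDeathSeq_zero, inv_one]
      _ ≤ (-z)⁻¹ := mul_le_of_le_one_right hz₀ (sub_le_self _ (inv_pos.mpr (hr M)).le)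

-- For `u_n := π_n r_n²` and `X_n` the denominators in the previous lemma we have
-- `X_n² = a_n c_{n+1} u_n u_{n+1}`, so AM-GM bounds `(a_n c_{n+1})^(-1/4)` by a combination of
-- `u_n`, `u_{n+1}` and `1 / X_n`.
theorem not_summable_potentialCoeff_mul_sq (ha : ∀ n, 0 < a n) (hc : ∀ n, 0 < c (n + 1))
    (hcarleman : ¬Summable fun n => (a n * c (n + 1)) ^ (-(1 / 4) : ℝ)) {z : ℝ} (hz : z < 0) :
    ¬Summable fun n => potentialCoeff a c n * birthDeathSeq a c z n ^ 2 := by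
  intro hsum
  have hr (k : ℕ) : 0 < birthDeathSeq a c z k :=
    one_pos.trans_le (one_le_birthDeathSeq ha hc hz.le k)
  have hπ := potentialCoeff_pos ha hc
  have hac (n : ℕ) : 0 < a n * c (n + 1) := mul_pos (ha n) (hc n)
  refine hcarleman ?_
  have hbound := (((hsum.add ((summable_nat_add_iff 1).mpr hsum)).div_const 2).add
    (summable_one_div_mul_birthDeathSeq ha hc hz)).div_const 2
  refine hbound.of_nonneg_of_le (fun n => (Real.rpow_pos_of_pos (hac n) _).le) fun n => ?_
  set N : ℝ := (a n * c (n + 1)) ^ (1 / 4 : ℝ) with hN_def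
  have hN : 0 < N := Real.rpow_pos_of_pos (hac n) _
  have hN4 : N ^ 4 = a n * c (n + 1) := by
    rw [hN_def, ← Real.rpow_mul_natCast (hac n).le]
    norm_num
  have hflux_pos := mul_pos (mul_pos (ha n) (hπ n)) (mul_pos (hr n) (hr (n + 1)))
  have key := two_div_le_add_one_div hN hflux_pos (mul_pos (hπ n) (pow_pos (hr n) 2)).le
    (mul_pos (hπ (n + 1)) (pow_pos (hr (n + 1)) 2)).le (by
      rw [hN4]
      linear_combination -(a n * potentialCoeff a c n * birthDeathSeq a c z n ^ 2 *
        birthDeathSeq a c z (n + 1) ^ 2) * mul_potentialCoeff_succ (a := a) (hc n).ne')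
  rw [Real.rpow_neg (hac n).le, ← hN_def]
  rw [div_eq_mul_inv] at key
  linarith

end Growth

section MomentFunctional

open Polynomial

/-- The functional `L` is integration of polynomials against the measure `μ`, all of whose moments
are finite. -/
structure IsMomentFunctional (L : ℝ[X] →ₗ[ℝ] ℝ) (μ : Measure ℝ) : Prop where
  integrable : ∀ P : ℝ[X], Integrable (fun y => P.eval y) μ
  integral_eq : ∀ P : ℝ[X], ∫ y, P.eval y ∂μ = L P

theorem exists_isMomentFunctional {μ : Measure ℝ}
    (hmom : ∀ n : ℕ, Integrable (fun y : ℝ => |y| ^ n) μ) : ∃ L, IsMomentFunctional L μ := by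
  have hint (P : ℝ[X]) : Integrable (fun y => P.eval y) μ := by
    induction P using Polynomial.induction_on' with
    | add P Q hP hQ =>
      simp only [eval_add]
      exact hP.add hQ
    | monomial n r =>
      have hpow : Integrable (fun y : ℝ => y ^ n) μ :=
        (hmom n).mono (by fun_prop) (.of_forall fun y => by simp)
      simpa only [eval_monomial] using hpow.const_mul r
  exact ⟨{ toFun := fun P => ∫ y, P.eval y ∂μ
           map_add' := fun P Q => by simp only [eval_add, integral_add (hint P) (hint Q)]
           map_smul' := fun r P => by
            simp only [eval_smul, smul_eq_mul, integral_const_mul, RingHom.id_apply] },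
    hint, fun _ => rfl⟩

variable {L : ℝ[X] →ₗ[ℝ] ℝ} {μ : Measure ℝ}

theorem IsMomentFunctional.isFiniteMeasure (hL : IsMomentFunctional L μ) : IsFiniteMeasure μ := by
  have hone : Integrable (fun _ : ℝ => (1 : ℝ)) μ := by
    simpa only [eval_one] using hL.integrable 1
  simpa [integrable_const_iff] using hone

theorem IsMomentFunctional.withDensity (hL : IsMomentFunctional L μ) {f : ℝ[X]}
    (hf : ∀ᵐ y ∂μ, 0 ≤ f.eval y) :
    IsMomentFunctional (L ∘ₗ LinearMap.mulLeft ℝ f)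
      (μ.withDensity fun y => ENNReal.ofReal (f.eval y)) := by
  have hmeas : Measurable fun y => ENNReal.ofReal (f.eval y) := by fun_prop
  have hfin : ∀ᵐ y ∂μ, ENNReal.ofReal (f.eval y) < ⊤ := .of_forall fun _ => ENNReal.ofReal_lt_top
  have hmul (P : ℝ[X]) :
      (fun y => (ENNReal.ofReal (f.eval y)).toReal • P.eval y) =ᵐ[μ] fun y => (f * P).eval y := by
    filter_upwards [hf] with y hy
    rw [ENNReal.toReal_ofReal hy, eval_mul, smul_eq_mul]
  refine ⟨fun P => ?_, fun P => ?_⟩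
  · rw [integrable_withDensity_iff_integrable_smul' hmeas hfin]
    exact (hL.integrable (f * P)).congr (hmul P).symm
  · rw [integral_withDensity_eq_integral_toReal_smul hmeas hfin, integral_congr_ae (hmul P),
      hL.integral_eq, LinearMap.comp_apply, LinearMap.mulLeft_apply]

variable {a c : ℕ → ℝ} {ℓ : ℝ[X]}

-- Chebyshev's inequality for the square of the kernel polynomial at `b`, which on `{ℓ ≤ b}` is at
-- least its value at `b`.
theorem IsMomentFunctional.birthDeathKernel_mul_measureReal_le (ha : ∀ n, 0 < a n)
    (hc : ∀ n, 0 < c (n + 1)) (hL : IsMomentFunctional L μ)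
    (hr : IsOrthogonalFor L (birthDeathSeq a c ℓ)) {b : ℝ} (hb : b ≤ 0) (M : ℕ) :
    birthDeathKernel a c b b M * μ.real {y | ℓ.eval y ≤ b} ≤ L 1 := by
  have := hL.isFiniteMeasure
  set T := birthDeathKernel a c b b M
  set Q := birthDeathKernel a c b ℓ M with hQ_def
  have hT : 0 ≤ T := birthDeathKernel_self_nonneg ha hc b M
  have hone : 0 ≤ L 1 := by
    rw [← hL.integral_eq]
    exact integral_nonneg fun y => by simp
  have hsub (y : ℝ) (hy : ℓ.eval y ≤ b) : T ^ 2 ≤ (Q * Q).eval y := by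
    have hQ : Q.eval y = birthDeathKernel a c b (ℓ.eval y) M := by
      simpa only [coe_aeval_eq_eval] using map_birthDeathKernel (aeval y) b ℓ M
    rw [eval_mul, ← sq, hQ]
    exact pow_le_pow_left₀ hT (birthDeathKernel_self_le ha hc hy hb M) 2
  have hcheb : T * (T * μ.real {y | ℓ.eval y ≤ b}) ≤ T * L 1 := calc
    T * (T * μ.real {y | ℓ.eval y ≤ b}) = T ^ 2 * μ.real {y | ℓ.eval y ≤ b} := by ring
    _ ≤ T ^ 2 * μ.real {y | T ^ 2 ≤ (Q * Q).eval y} :=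
      mul_le_mul_of_nonneg_left (measureReal_mono hsub) (sq_nonneg T)
    _ ≤ ∫ y, (Q * Q).eval y ∂μ := by
      refine mul_meas_ge_le_integral_of_nonneg (.of_forall fun y => ?_) (hL.integrable _) _
      rw [eval_mul]
      exact mul_self_nonneg _
    _ = T * L 1 := by
      rw [hL.integral_eq, hQ_def,
        hr.map_birthDeathKernel_mul_self (fun n => (ha n).ne') (fun n => (hc n).ne')]
  rcases hT.eq_or_lt with hT₀ | hT₀
  · rwa [← hT₀, zero_mul]
  · exact le_of_mul_le_mul_left hcheb hT₀

/-- The support theorem of Karlin and McGregor, under Carleman's condition. -/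
theorem IsMomentFunctional.ae_nonneg_eval (ha : ∀ n, 0 < a n) (hc : ∀ n, 0 < c (n + 1))
    (hcarleman : ¬Summable fun n => (a n * c (n + 1)) ^ (-(1 / 4) : ℝ))
    (hL : IsMomentFunctional L μ) (hr : IsOrthogonalFor L (birthDeathSeq a c ℓ)) :
    ∀ᵐ y ∂μ, 0 ≤ ℓ.eval y := by
  rw [ae_const_le_iff_forall_lt_measure_zero]
  intro b hb
  have := hL.isFiniteMeasure
  by_contra hμ
  have hpos : 0 < μ.real {y | ℓ.eval y ≤ b} := measureReal_nonneg.lt_of_ne' (by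
    simpa [measureReal_eq_zero_iff] using hμ)
  refine not_summable_potentialCoeff_mul_sq ha hc hcarleman hb
    (summable_of_sum_range_le (c := L 1 / μ.real {y | ℓ.eval y ≤ b}) (fun n => ?_) fun M => ?_)
  · exact mul_nonneg (potentialCoeff_pos ha hc n).le (sq_nonneg _)
  · rw [← birthDeathKernel_self, le_div_iff₀ hpos]
    exact hL.birthDeathKernel_mul_measureReal_le ha hc hr hb.le M

theorem IsMomentFunctional.ae_nonneg_eval_mul (ha : ∀ n, 0 < a n) (hc : ∀ n, 0 < c (n + 1))
    (hcarleman : ¬Summable fun n => (a n * c (n + 1)) ^ (-(1 / 4) : ℝ))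
    (hL : IsMomentFunctional L μ) {f : ℝ[X]} (hf : ∀ᵐ y ∂μ, 0 ≤ f.eval y)
    (hr : IsOrthogonalFor (L ∘ₗ LinearMap.mulLeft ℝ f) (birthDeathSeq a c ℓ)) :
    ∀ᵐ y ∂μ, 0 ≤ (f * ℓ).eval y := by
  have hℓ := (hL.withDensity hf).ae_nonneg_eval ha hc hcarleman hr
  rw [ae_withDensity_iff (by fun_prop)] at hℓ
  filter_upwards [hf, hℓ] with y hfy hℓy
  rw [eval_mul]
  rcases hfy.eq_or_lt with h | h
  · rw [← h, zero_mul]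
  · exact mul_nonneg hfy (hℓy (ENNReal.ofReal_pos.mpr h).ne')

end MomentFunctional

section QCoefficients

open Polynomial Asymptotics Filter

variable {η θ τ q s : ℝ}

theorem qnum_zero : qnum q 0 = 0 := Finset.sum_range_zero _

theorem qnum_succ (n : ℕ) : qnum q (n + 1) = q * qnum q n + 1 := geom_sum_succ

theorem qnum_succ_eq_add_pow (n : ℕ) : qnum q (n + 1) = qnum q n + q ^ n :=
  Finset.sum_range_succ _ _

theorem qnum_add (n k : ℕ) : qnum q (n + k) = qnum q k + q ^ k * qnum q n := by
  rw [add_comm, qnum, Finset.sum_range_add, ← qnum, qnum, qnum, Finset.mul_sum]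
  simp only [pow_add]

theorem mul_qnum_pred_mul_qnum (n : ℕ) :
    q * qnum q (n - 1) * qnum q n = (qnum q n - 1) * qnum q n := by
  cases n with
  | zero => simp [qnum_zero]
  | succ n => rw [Nat.add_sub_cancel, qnum_succ n, add_sub_cancel_right]

theorem qnum_nonneg (hq : 0 ≤ q) (n : ℕ) : 0 ≤ qnum q n :=
  Finset.sum_nonneg fun i _ => pow_nonneg hq i

theorem qnum_succ_pos (hq : 0 ≤ q) (n : ℕ) : 0 < qnum q (n + 1) := by
  have := mul_nonneg hq (qnum_nonneg hq n)
  rw [qnum_succ]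
  positivity

theorem abs_qnum_le (hq : |q| ≤ 1) (n : ℕ) : |qnum q n| ≤ n := by
  calc |qnum q n| ≤ ∑ i ∈ Finset.range n, |q ^ i| := Finset.abs_sum_le_sum_abs _ _
    _ ≤ ∑ _i ∈ Finset.range n, (1 : ℝ) := Finset.sum_le_sum fun i _ => by
      rw [abs_pow]
      exact pow_le_one₀ (abs_nonneg q) hq
    _ = n := by simp

theorem aCoef_pos (hq : 0 ≤ q) (hη : 0 < η) (hθ : 0 ≤ θ) (hτ : 0 ≤ τ) (n : ℕ) :
    0 < aCoef η θ τ q n := by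
  have := qnum_nonneg hq n
  rw [aCoef]
  positivity

theorem cCoef_zero : cCoef η τ q s 0 = 0 := by
  rw [cCoef, qnum_zero, mul_zero]

theorem cCoef_succ_pos (hq : 0 ≤ q) (hη : 0 < η) (hτ : 0 ≤ τ) (hs : 0 < s) (n : ℕ) :
    0 < cCoef η τ q s (n + 1) := by
  have := qnum_nonneg hq n
  have := qnum_succ_pos hq n
  rw [cCoef, Nat.add_sub_cancel]
  positivity

theorem bCoef_eq (n : ℕ) :
    bCoef η θ τ q s n = aCoef η θ τ q n + cCoef η τ q s n - η⁻¹ := by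
  rw [aCoef, bCoef, cCoef]
  ring

theorem aCoef_add_cCoef (n k : ℕ) :
    aCoef η θ τ q (n + (k + 1)) + q ^ (2 * (k + 1)) * cCoef η τ q s n =
      q * (aCoef η θ τ q (n + k) + q ^ (2 * k) * cCoef η τ q s (n + 1)) +
        (aCoef η θ τ q (k + 1) - q * aCoef η θ τ q k - s * η * q ^ (2 * k + 1)) := by
  have hpow : q ^ k = 1 + q * qnum q k - qnum q k := by
    linear_combination qnum_succ (q := q) k - qnum_succ_eq_add_pow k
  unfold aCoef cCoef
  rw [← add_assoc, Nat.add_sub_cancel, qnum_succ (n + k), qnum_succ n, qnum_succ k, qnum_add]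
  linear_combination q * q ^ (2 * k) * η * τ * mul_qnum_pred_mul_qnum (q := q) n -
    2 * q * q ^ k * qnum q n * η * τ * hpow

theorem ACoef_zero (x : ℝ) : ACoef η θ τ q x s 0 = x + η⁻¹ := by
  rw [ACoef, aCoef, qnum_zero]
  ring

theorem isBigO_one_natCast : (fun _ : ℕ => (1 : ℝ)) =O[atTop] fun n : ℕ => (n : ℝ) :=
  .of_bound 1 <| (eventually_ge_atTop 1).mono fun n hn => by simpa using hn

theorem isBigO_qnum_add (hq : |q| ≤ 1) (k : ℕ) :
    (fun n => qnum q (n + k)) =O[atTop] fun n : ℕ => (n : ℝ) := by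
  have hle : (fun n => qnum q (n + k)) =O[atTop] fun n : ℕ => (n + k * 1 : ℝ) :=
    .of_bound 1 <| .of_forall fun n => by
      rw [mul_one, one_mul, ← Nat.cast_add]
      exact (abs_qnum_le hq (n + k)).trans (le_abs_self _)
  exact hle.trans ((isBigO_refl _ _).add (isBigO_one_natCast.const_mul_left _))

theorem isBigO_aCoef_add (hq : |q| ≤ 1) (k : ℕ) :
    (fun n => aCoef η θ τ q (n + k)) =O[atTop] fun n : ℕ => (n * n : ℝ) := by
  have h₁ := isBigO_one_natCast
  have hk := isBigO_qnum_add hq k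
  refine ((((h₁.mul h₁).const_mul_left η⁻¹).add ((h₁.mul hk).const_mul_left θ)).add
    ((hk.mul hk).const_mul_left (η * τ))).congr_left fun n => ?_
  rw [aCoef]
  ring

theorem isBigO_cCoef_succ (hq : |q| ≤ 1) :
    (fun n => cCoef η τ q s (n + 1)) =O[atTop] fun n : ℕ => (n * n : ℝ) := by
  have hk := isBigO_qnum_add hq
  refine (((isBigO_one_natCast.const_mul_left s).add ((hk 0).const_mul_left τ)).mul
    ((hk 1).const_mul_left η)).congr_left fun n => ?_
  rw [cCoef, Nat.add_sub_cancel, add_zero]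
  ring

theorem not_summable_rpow_of_isBigO {D : ℕ → ℝ} (hD : ∀ n, 0 < D n)
    (hO : D =O[atTop] fun n : ℕ => (n : ℝ) ^ 4) :
    ¬Summable fun n => D n ^ (-(1 / 4) : ℝ) := by
  intro hsum
  have hroot : (fun n => D n ^ (1 / 4 : ℝ)) =O[atTop] fun n : ℕ => (n : ℝ) := by
    refine (hO.rpow (by norm_num) (.of_forall fun n => by positivity)).congr_right fun n => ?_
    rw [← Real.rpow_natCast_mul n.cast_nonneg]
    norm_num
  refine Real.not_summable_natCast_inv (summable_of_isBigO_nat hsum ?_)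
  refine (hroot.inv_rev (.of_forall fun n h => ?_)).congr_right fun n => ?_
  · exact absurd h (Real.rpow_pos_of_pos (hD n) _).ne'
  · rw [Real.rpow_neg (hD n).le]

/-- The birth rates `a_{n+k}` reached after `k` Christoffel transforms. -/
noncomputable def levelBirth (η θ τ q : ℝ) (k n : ℕ) : ℝ :=
  aCoef η θ τ q (n + k)

/-- The death rates `q^{2k} c_n` reached after `k` Christoffel transforms. -/
noncomputable def levelDeath (η τ q s : ℝ) (k n : ℕ) : ℝ :=
  q ^ (2 * k) * cCoef η τ q s n

theorem levelBirth_zero : levelBirth η θ τ q 0 = aCoef η θ τ q := rfl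

theorem levelDeath_zero : levelDeath η τ q s 0 = cCoef η τ q s := by
  ext n
  rw [levelDeath, mul_zero, pow_zero, one_mul]

theorem levelDeath_succ_pos (hq : q ≠ 0) (hc : ∀ n, 0 < cCoef η τ q s (n + 1)) (k n : ℕ) :
    0 < levelDeath η τ q s k (n + 1) :=
  mul_pos ((even_two_mul k).pow_pos hq) (hc n)

theorem not_summable_levelBirth_mul_levelDeath (hq : |q| ≤ 1) {k : ℕ}
    (ha : ∀ n, 0 < levelBirth η θ τ q k n) (hc : ∀ n, 0 < levelDeath η τ q s k (n + 1)) :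
    ¬Summable fun n =>
      (levelBirth η θ τ q k n * levelDeath η τ q s k (n + 1)) ^ (-(1 / 4) : ℝ) := by
  refine not_summable_rpow_of_isBigO (fun n => mul_pos (ha n) (hc n)) ?_
  refine ((isBigO_aCoef_add hq k).mul
    ((isBigO_cCoef_succ hq).const_mul_left (q ^ (2 * k)))).congr_right fun n => ?_
  ring

/-- `A_k(·, s)` as a polynomial in its first argument. -/
noncomputable def APoly (η θ τ q s : ℝ) (k : ℕ) : ℝ[X] :=
  C (aCoef η θ τ q k - s * η * q ^ k * qnum q k) + C (q ^ k) * X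

theorem eval_APoly (x : ℝ) (k : ℕ) : (APoly η θ τ q s k).eval x = ACoef η θ τ q x s k := by
  simp only [APoly, ACoef, eval_add, eval_mul, eval_C, eval_X]
  ring

theorem APoly_succ (k : ℕ) :
    APoly η θ τ q s (k + 1) = q • APoly η θ τ q s k + algebraMap ℝ ℝ[X]
      (aCoef η θ τ q (k + 1) - q * aCoef η θ τ q k - s * η * q ^ (2 * k + 1)) := by
  refine Polynomial.funext fun x => ?_
  simp only [APoly, algebraMap_eq, eval_add, eval_smul, eval_mul, eval_C, eval_X, smul_eq_mul,
    qnum_succ_eq_add_pow]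
  ring

/-- The orthogonal polynomials reached after `k` Christoffel transforms: for `q ≠ 0`, those of
`A_0 ⋯ A_{k-1} μ` when the sequence at `k = 0` is orthogonal for `μ`. -/
noncomputable def levelSeq (η θ τ q s : ℝ) (k : ℕ) : ℕ → ℝ[X] :=
  birthDeathSeq (levelBirth η θ τ q k) (levelDeath η τ q s k) (APoly η θ τ q s k)

end QCoefficients

section LevelSequences

open Polynomial

variable {η θ τ q s : ℝ} {L : ℝ[X] →ₗ[ℝ] ℝ} {μ : Measure ℝ} {p : ℕ → ℝ → ℝ}

theorem eq_neg_one_pow_mul_birthDeathSeq (ha : ∀ n, aCoef η θ τ q n ≠ 0)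
    (hp0 : ∀ y, p 0 y = 1)
    (hprec : ∀ (n : ℕ) (y : ℝ), y * p n y =
      aCoef η θ τ q n * p (n + 1) y + bCoef η θ τ q s n * p n y
        + cCoef η τ q s n * p (n - 1) y) (n : ℕ) (y : ℝ) :
    p n y = (-1) ^ n * birthDeathSeq (aCoef η θ τ q) (cCoef η τ q s) (y + η⁻¹) n := by
  refine eq_smul_birthDeathSeq ha (β := fun n => -aCoef η θ τ q n)
    (γ := fun n => -cCoef η τ q s (n + 1)) (g := fun n => (-1) ^ n) (R := fun n => p n y)
    (fun n => neg_ne_zero.mpr (ha n)) (fun n => by ring) (fun n => by ring) ?_ ?_ (fun n => ?_) n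
  · simp [hp0]
  · have h := hprec 0 y
    rw [bCoef_eq, cCoef_zero] at h
    simp only [smul_eq_mul]
    linear_combination h
  · have h := hprec (n + 1) y
    rw [bCoef_eq, Nat.add_sub_cancel] at h
    simp only [smul_eq_mul]
    linear_combination h

theorem IsMomentFunctional.isOrthogonalFor_levelSeq_zero (hL : IsMomentFunctional L μ)
    (ha : ∀ n, aCoef η θ τ q n ≠ 0) (hp0 : ∀ y, p 0 y = 1)
    (hprec : ∀ (n : ℕ) (y : ℝ), y * p n y =
      aCoef η θ τ q n * p (n + 1) y + bCoef η θ τ q s n * p n y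
        + cCoef η τ q s n * p (n - 1) y)
    (horth : ∀ m n : ℕ, m ≠ n → ∫ y, p m y * p n y ∂μ = 0) :
    IsOrthogonalFor L (levelSeq η θ τ q s 0) := by
  intro m n hmn
  set r := levelSeq η θ τ q s 0 with hr_def
  have hp (n : ℕ) (y : ℝ) : p n y = (-1) ^ n * (r n).eval y := by
    have hr := map_birthDeathSeq (aeval y) (a := aCoef η θ τ q) (c := cCoef η τ q s)
      (APoly η θ τ q s 0) n
    simp only [coe_aeval_eq_eval, eval_APoly, ACoef_zero] at hr
    rw [hr_def, levelSeq, levelBirth_zero, levelDeath_zero, hr,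
      eq_neg_one_pow_mul_birthDeathSeq ha hp0 hprec]
  have hint := horth m n hmn
  have hpp (y : ℝ) : p m y * p n y = (-1) ^ (m + n) * (r m * r n).eval y := by
    rw [hp, hp, eval_mul]
    ring
  simp only [hpp, integral_const_mul, hL.integral_eq] at hint
  exact (mul_eq_zero.mp hint).resolve_left (by simp)

theorem IsOrthogonalFor.levelSeq_of_zero (hq : q ≠ 0) (ha : ∀ n, aCoef η θ τ q n ≠ 0)
    (hc : ∀ n, cCoef η τ q s (n + 1) ≠ 0)
    (hr : IsOrthogonalFor L (levelSeq η θ τ q s 0)) (k : ℕ) :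
    IsOrthogonalFor (L ∘ₗ LinearMap.mulLeft ℝ (∏ j ∈ Finset.range k, APoly η θ τ q s j))
      (levelSeq η θ τ q s k) := by
  induction k with
  | zero => simpa using hr
  | succ k ih =>
    rw [Finset.prod_range_succ, LinearMap.mulLeft_mul, ← LinearMap.comp_assoc, levelSeq, APoly_succ]
    refine ih.mulLeft_birthDeathSeq (fun n => ha _) (fun n => ?_) (fun n => ha _) ?_ hq
      (fun n => ?_) (fun n => ?_)
    · exact mul_ne_zero (pow_ne_zero _ hq) (hc n)
    · rw [levelDeath, cCoef_zero, mul_zero]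
    · simp only [levelBirth, levelDeath, add_right_comm n 1 k, add_assoc n k 1]
      ring
    · exact aCoef_add_cCoef n k

theorem IsMomentFunctional.ae_nonneg_eval_prod_APoly (hq₀ : q ≠ 0) (hq : |q| ≤ 1)
    (ha : ∀ n, 0 < aCoef η θ τ q n) (hc : ∀ n, 0 < cCoef η τ q s (n + 1))
    (hL : IsMomentFunctional L μ)
    (hr : IsOrthogonalFor L (levelSeq η θ τ q s 0)) (k : ℕ) :
    ∀ᵐ y ∂μ, 0 ≤ (∏ j ∈ Finset.range k, APoly η θ τ q s j).eval y := by
  induction k with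
  | zero => simp
  | succ k ih =>
    have ha' (n : ℕ) : 0 < levelBirth η θ τ q k n := ha (n + k)
    have hc' := levelDeath_succ_pos hq₀ hc k
    rw [Finset.prod_range_succ]
    exact hL.ae_nonneg_eval_mul ha' hc' (not_summable_levelBirth_mul_levelDeath hq ha' hc') ih
      (hr.levelSeq_of_zero hq₀ (fun n => (ha n).ne') (fun n => (hc n).ne') k)

theorem IsMomentFunctional.ae_nonneg_prod_ACoef (hq : |q| ≤ 1)
    (ha : ∀ n, 0 < aCoef η θ τ q n) (hc : ∀ n, 0 < cCoef η τ q s (n + 1))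
    (hL : IsMomentFunctional L μ)
    (hr : IsOrthogonalFor L (levelSeq η θ τ q s 0)) (n : ℕ) :
    ∀ᵐ y ∂μ, 0 ≤ ∏ j ∈ Finset.range (n + 1), ACoef η θ τ q y s j := by
  rcases eq_or_ne q 0 with rfl | hq₀
  · have ha' (n : ℕ) : 0 < levelBirth η θ τ 0 0 n := ha n
    have hc' (n : ℕ) : 0 < levelDeath η τ 0 s 0 (n + 1) := by
      rw [levelDeath_zero]
      exact hc n
    filter_upwards [hL.ae_nonneg_eval ha' hc'
      (not_summable_levelBirth_mul_levelDeath hq ha' hc') hr] with y hy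
    rw [eval_APoly] at hy
    rw [Finset.prod_range_succ']
    refine mul_nonneg (Finset.prod_nonneg fun j _ => ?_) hy
    simpa [ACoef] using (ha (j + 1)).le
  · simpa only [eval_prod, eval_APoly] using
      hL.ae_nonneg_eval_prod_APoly hq₀ hq ha hc hr (n + 1)

end LevelSequences

theorem stmt15_general (η θ τ q s : ℝ) (hq : |q| ≤ 1)
    (ha : ∀ n, 0 < aCoef η θ τ q n) (hc : ∀ n, 0 < cCoef η τ q s (n + 1))
    (p : ℕ → ℝ → ℝ)
    (hp0 : ∀ y : ℝ, p 0 y = 1)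
    (hprec : ∀ (n : ℕ) (y : ℝ), y * p n y =
      aCoef η θ τ q n * p (n + 1) y + bCoef η θ τ q s n * p n y
        + cCoef η τ q s n * p (n - 1) y)
    (μ : Measure ℝ)
    (hmom : ∀ n : ℕ, Integrable (fun y : ℝ => |y| ^ n) μ)
    (horth : ∀ m n : ℕ, m ≠ n → ∫ y, p m y * p n y ∂μ = 0)
    (x : ℝ)
    (hsupp : ∀ U : Set ℝ, IsOpen U → x ∈ U → 0 < μ U) (n : ℕ) :
    0 ≤ ∏ j ∈ Finset.range (n + 1), ACoef η θ τ q x s j := by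
  obtain ⟨L, hL⟩ := exists_isMomentFunctional hmom
  have hr := hL.isOrthogonalFor_levelSeq_zero (fun n => (ha n).ne') hp0 hprec horth
  have hae := hL.ae_nonneg_prod_ACoef hq ha hc hr n
  have hopen : IsOpen {y | ∏ j ∈ Finset.range (n + 1), ACoef η θ τ q y s j < 0} := by
    refine isOpen_lt ?_ continuous_const
    unfold ACoef
    fun_prop
  by_contra! hneg
  exact (hsupp _ hopen hneg).ne' (by simpa only [ae_iff, not_le] using hae)

/-- for `0 ≤ q ≤ 1`, `η > 0`, `θ ≥ 0`, `τ ≥ 0`, `s > 0`, if `x` belongs to the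
topological support of an orthogonality measure `μ_s` of `{p_n(·;s)}` (every open
neighborhood of `x` has positive measure), then `∏_{j=0}^n A_j(x,s) ≥ 0` for every `n ≥ 0`. -/
theorem stmt15 (η θ τ q s : ℝ)
    (hq0 : 0 ≤ q) (hq1 : q ≤ 1) (hη : 0 < η) (hθ : 0 ≤ θ) (hτ : 0 ≤ τ) (hs : 0 < s)
    (p : ℕ → ℝ → ℝ)
    (hp0 : ∀ y : ℝ, p 0 y = 1)
    (hprec : ∀ (n : ℕ) (y : ℝ), y * p n y =
      aCoef η θ τ q n * p (n + 1) y + bCoef η θ τ q s n * p n y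
        + cCoef η τ q s n * p (n - 1) y)
    (μ : Measure ℝ)
    (hprob : IsProbabilityMeasure μ)
    (hmom : ∀ n : ℕ, Integrable (fun y : ℝ => |y| ^ n) μ)
    (horth : ∀ m n : ℕ, m ≠ n → ∫ y, p m y * p n y ∂μ = 0)
    (x : ℝ)
    (hsupp : ∀ U : Set ℝ, IsOpen U → x ∈ U → 0 < μ U) :
    ∀ n : ℕ, 0 ≤ ∏ j ∈ Finset.range (n + 1), ACoef η θ τ q x s j :=
  stmt15_general η θ τ q s (abs_le.mpr ⟨by linarith, hq1⟩) (aCoef_pos hq0 hη hθ hτ)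
    (cCoef_succ_pos hq0 hη hτ hs) p hp0 hprec μ hmom horth x hsupp
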